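/- arXiv:2502.02545 — 6 statements merged into one kernel-verified Lean document; each statement's English description precedes it below -/
import Mathlib

section
/- Let n, d, p be positive integers, X ∈ ℝ^{n×d}, G_1,…,G_n ∈ ℝ^{p×p}, and γ ∈ ℝ such that γI_p + G_i is invertible for every i ∈ [n]. Suppose Ω ∈ ℝ^{n×p} satisfies the eigenvector equation (X Xᵀ − I_n)·𝔊(Ω) = γ·Ω. Then the matrix W := Xᵀ·𝔊(Ω) ∈ ℝ^{d×p} satisfies T_γ(W) = W, i.e., Xᵀ·𝔉_γ(X·W) = W. -/
/-!
The eigenvector equation rearranges to `X W = 𝔊(Ω) + γ Ω`, so the `i`-th row of `X W` is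
`(G i + γ I_p) (Ω i)`. Since `G i + γ I_p` is invertible, `G i (G i + γ I_p)⁻¹` sends this row to
`G i (Ω i)`; thus `𝔉_γ(X W) = 𝔊(Ω)`, and multiplying by `Xᵀ` gives `W`.
-/

open Matrix

/-- Row-wise action `𝔊`: the `i`-th row of `𝔊(Ω)` is `G i` times the `i`-th row of `Ω`. -/
def rowActG {n p : ℕ} (G : Fin n → Matrix (Fin p) (Fin p) ℝ)
    (Ω : Matrix (Fin n) (Fin p) ℝ) : Matrix (Fin n) (Fin p) ℝ :=
  Matrix.of fun i => (G i).mulVec (Ω i)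

/-- Row-wise action `𝔉_γ`: the `i`-th row of `𝔉_γ(Ψ)` is `G i (G i + γ I_p)⁻¹` times the
`i`-th row of `Ψ`. -/
noncomputable def rowActF {n p : ℕ} (G : Fin n → Matrix (Fin p) (Fin p) ℝ) (γ : ℝ)
    (Ψ : Matrix (Fin n) (Fin p) ℝ) : Matrix (Fin n) (Fin p) ℝ :=
  Matrix.of fun i => (G i * (G i + γ • (1 : Matrix (Fin p) (Fin p) ℝ))⁻¹).mulVec (Ψ i)

/-- If `(X Xᵀ − I_n) 𝔊(Ω) = γ Ω` and each `γ I_p + G i` is invertible, then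
`W := Xᵀ 𝔊(Ω)` satisfies `T_γ(W) = Xᵀ 𝔉_γ(X W) = W`. -/
theorem stmt0 (n d p : ℕ) (hn : 0 < n) (hd : 0 < d) (hp : 0 < p)
    (X : Matrix (Fin n) (Fin d) ℝ) (G : Fin n → Matrix (Fin p) (Fin p) ℝ) (γ : ℝ)
    (hinv : ∀ i, IsUnit (γ • (1 : Matrix (Fin p) (Fin p) ℝ) + G i))
    (Ω : Matrix (Fin n) (Fin p) ℝ)
    (heig : (X * Xᵀ - 1) * rowActG G Ω = γ • Ω) :
    Xᵀ * rowActF G γ (X * (Xᵀ * rowActG G Ω)) = Xᵀ * rowActG G Ω := by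
  have hXW : X * (Xᵀ * rowActG G Ω) = rowActG G Ω + γ • Ω := by
    rw [← heig, Matrix.sub_mul, Matrix.one_mul, Matrix.mul_assoc, add_sub_cancel]
  congr 1
  rw [hXW]
  funext i
  have hrow : (rowActG G Ω + γ • Ω) i
      = (G i + γ • (1 : Matrix (Fin p) (Fin p) ℝ)).mulVec (Ω i) := by
    rw [Matrix.add_mulVec, Matrix.smul_mulVec, Matrix.one_mulVec]
    rfl
  have hdet : IsUnit (G i + γ • (1 : Matrix (Fin p) (Fin p) ℝ)).det :=
    (Matrix.isUnit_iff_isUnit_det _).1 (add_comm (G i) _ ▸ hinv i)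
  change (G i * (G i + γ • (1 : Matrix (Fin p) (Fin p) ℝ))⁻¹).mulVec
    ((rowActG G Ω + γ • Ω) i) = (G i).mulVec (Ω i)
  rw [hrow, Matrix.mulVec_mulVec, Matrix.mul_assoc, Matrix.nonsing_inv_mul _ hdet,
    Matrix.mul_one]
end

section
/- Let n, d, p be positive integers, X ∈ ℝ^{n×d}, G_1,…,G_n ∈ ℝ^{p×p} with I_p + G_i invertible for every i ∈ [n]. Suppose W ∈ ℝ^{d×p} satisfies T(W) = γ_T·W for some γ_T ∈ ℝ, where T := T_1. Define Ω ∈ ℝ^{n×p} row-wise by row_i(Ω) = (I_p + G_i)^{−1}·row_i(X·W). Then (X Xᵀ − I_n)·𝔊(Ω) = γ_T·Ω + (γ_T − 1)·𝔊(Ω). -/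
/-! With `Ω` having rows `(I + G i)⁻¹ · row_i(X W)`, one has `𝔉₁(X W) = 𝔊(Ω)` and
`X W = Ω + 𝔊(Ω)`. Multiplying the eigenvalue equation `Xᵀ 𝔉₁(X W) = γ_T W` by `X` on the left
gives `X Xᵀ 𝔊(Ω) = γ_T X W = γ_T (Ω + 𝔊(Ω))`; subtracting `𝔊(Ω)` is the claim. -/

open Matrix

/-- If `T(W) = Xᵀ 𝔉₁(X W) = γ_T W` and `Ω` has rows `(I_p + G i)⁻¹ · row_i(X W)`, then
`L(Ω) = (X Xᵀ − I_n) 𝔊(Ω) = γ_T Ω + (γ_T − 1) 𝔊(Ω)`. -/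
theorem stmt1 (n d p : ℕ) (hn : 0 < n) (hd : 0 < d) (hp : 0 < p)
    (X : Matrix (Fin n) (Fin d) ℝ) (G : Fin n → Matrix (Fin p) (Fin p) ℝ)
    (hinv : ∀ i, IsUnit ((1 : Matrix (Fin p) (Fin p) ℝ) + G i))
    (W : Matrix (Fin d) (Fin p) ℝ) (γT : ℝ)
    (hW : Xᵀ * rowActF G 1 (X * W) = γT • W)
    (Ω : Matrix (Fin n) (Fin p) ℝ)
    (hΩ : ∀ i, Ω i = ((1 + G i)⁻¹).mulVec ((X * W) i)) :
    (X * Xᵀ - 1) * rowActG G Ω = γT • Ω + (γT - 1) • rowActG G Ω := by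
  -- `𝔉₁(X W) = 𝔊(Ω)`, since the rows of `Ω` already carry the factor `(I + G i)⁻¹`
  have hF : rowActF G 1 (X * W) = rowActG G Ω := by
    ext i j
    simp only [rowActF, rowActG, Matrix.of_apply, hΩ i, Matrix.mulVec_mulVec, one_smul,
      add_comm (G i)]
  -- `X W = Ω + 𝔊(Ω)`: apply `I + G i` to the `i`-th row of `Ω`
  have hXW : X * W = Ω + rowActG G Ω := by
    ext i j
    have h : (1 + G i).mulVec (Ω i) = (X * W) i := by
      rw [hΩ i, Matrix.mulVec_mulVec,
        Matrix.mul_nonsing_inv _ ((Matrix.isUnit_iff_isUnit_det _).1 (hinv i)),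
        Matrix.one_mulVec]
    rw [← h, Matrix.add_mulVec, Matrix.one_mulVec]
    simp [rowActG]
  rw [Matrix.sub_mul, Matrix.one_mul, Matrix.mul_assoc, ← hF, hW, Matrix.mul_smul, hF, hXW,
    smul_add, sub_smul, one_smul, add_sub_assoc]
end

section
/- Let n, d, p be positive integers, X ∈ ℝ^{n×d}, G_1,…,G_n ∈ ℝ^{p×p} with I_p + G_i invertible for every i ∈ [n]. If W ∈ ℝ^{d×p} is a nonzero matrix with T(W) = W (an eigenvector of the symmetric spectral matrix T := T_1 with eigenvalue 1), then the matrix Ω ∈ ℝ^{n×p} defined row-wise by row_i(Ω) = (I_p + G_i)^{−1}·row_i(X·W) is nonzero and satisfies L(Ω) = Ω, i.e., Ω is an eigenvector of the asymmetric spectral operator L with eigenvalue 1. -/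
/-! The matrix `𝔊(Ω)` equals `𝔉₁(X W)`, because row `i` of both is `G i (I + G i)⁻¹` applied to row `i`
of `X W`. The eigenvector equation for `T` therefore reads `Xᵀ 𝔊(Ω) = W`, so `Ω = 0` would force
`W = 0`. Multiplying by `X` gives `X Xᵀ 𝔊(Ω) = X W`, and `X W = Ω + 𝔊(Ω)` because
`(I + G i) Ω i` is row `i` of `X W`; subtracting `𝔊(Ω)` leaves `L(Ω) = Ω`. -/

open Matrix

/-- If `W ≠ 0` is an eigenvector of the symmetric spectral matrix `T = T₁` with eigenvalue 1,
then `Ω` with rows `(I_p + G i)⁻¹ · row_i(X W)` is nonzero and satisfies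
`L(Ω) = (X Xᵀ − I_n) 𝔊(Ω) = Ω`. -/
theorem stmt2 (n d p : ℕ) (hn : 0 < n) (hd : 0 < d) (hp : 0 < p)
    (X : Matrix (Fin n) (Fin d) ℝ) (G : Fin n → Matrix (Fin p) (Fin p) ℝ)
    (hinv : ∀ i, IsUnit ((1 : Matrix (Fin p) (Fin p) ℝ) + G i))
    (W : Matrix (Fin d) (Fin p) ℝ) (hW0 : W ≠ 0)
    (hW : Xᵀ * rowActF G 1 (X * W) = W)
    (Ω : Matrix (Fin n) (Fin p) ℝ)
    (hΩ : ∀ i, Ω i = ((1 + G i)⁻¹).mulVec ((X * W) i)) :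
    Ω ≠ 0 ∧ (X * Xᵀ - 1) * rowActG G Ω = Ω := by
  have hGF : rowActG G Ω = rowActF G 1 (X * W) := by
    ext i j
    simp only [rowActG, rowActF, Matrix.of_apply, hΩ i, Matrix.mulVec_mulVec, one_smul,
      add_comm (G i) 1]
  have hXG : Xᵀ * rowActG G Ω = W := by rw [hGF, hW]
  have hsum : X * W = Ω + rowActG G Ω := by
    ext i j
    have h : (1 + G i).mulVec (Ω i) = (X * W) i := by
      rw [hΩ i, Matrix.mulVec_mulVec,
        Matrix.mul_nonsing_inv _ ((Matrix.isUnit_iff_isUnit_det _).1 (hinv i)),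
        Matrix.one_mulVec]
    rw [Matrix.add_mulVec, Matrix.one_mulVec] at h
    exact (congrFun h j).symm
  refine ⟨?_, ?_⟩
  · rintro rfl
    have h0 : rowActG G (0 : Matrix (Fin n) (Fin p) ℝ) = 0 := by
      ext i j
      exact congrFun (Matrix.mulVec_zero (G i)) j
    apply hW0
    rw [← hXG, h0, Matrix.mul_zero]
  · rw [Matrix.sub_mul, Matrix.one_mul, Matrix.mul_assoc, hXG, hsum, add_sub_cancel_right]
end

section
/- Let (Y, μ) be a probability space, λ : Y → ℝ measurable, and â, α ∈ ℝ with â > 1 and α > 0. Set D := (â−1)·λ + â and assume: λ(y) > −1 for μ-almost every y; μ({y : λ(y) ≠ 0}) > 0; λ, λ/D, λ²/D, and (λ/D)² are integrable; E[λ] = 0; and E[(λ/D)²] = 1/α. Then â·(1 + α·E[λ/D]) < 1. -/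
/-!
Write `D = (â−1)λ + â = (â−1)(λ+1) + 1`, so `D > 1` almost everywhere. From
`â λ/D = λ − (â−1) λ²/D` and `E[λ] = 0` one gets `â E[λ/D] = −(â−1) E[λ²/D]`.
Pointwise `(λ/D)² ≤ λ²/D`, strictly where `λ ≠ 0`, hence `1/α = E[(λ/D)²] < E[λ²/D]` and
`â (1 + α E[λ/D]) = â − α (â−1) E[λ²/D] < â − (â−1) = 1`.
-/

open MeasureTheory

/-- Edge of the bulk is below the informative eigenvalue: with `D = (â−1)λ + â`, `â > 1`,
`λ > −1` a.e., `λ` not a.e. zero, `E[λ] = 0` and `E[(λ/D)²] = 1/α`, one has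
`â (1 + α E[λ/D]) < 1`. -/
theorem stmt8 {Y : Type*} [MeasurableSpace Y] (μ : Measure Y) [IsProbabilityMeasure μ]
    (lam : Y → ℝ) (hmeas : Measurable lam) (ahat α : ℝ) (ha : 1 < ahat) (hα : 0 < α)
    (hlow : ∀ᵐ y ∂μ, -1 < lam y)
    (hne : 0 < μ {y | lam y ≠ 0})
    (h1 : Integrable lam μ)
    (h2 : Integrable (fun y => lam y / ((ahat - 1) * lam y + ahat)) μ)
    (h3 : Integrable (fun y => (lam y) ^ 2 / ((ahat - 1) * lam y + ahat)) μ)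
    (h4 : Integrable (fun y => (lam y / ((ahat - 1) * lam y + ahat)) ^ 2) μ)
    (hmean : ∫ y, lam y ∂μ = 0)
    (hfix : ∫ y, (lam y / ((ahat - 1) * lam y + ahat)) ^ 2 ∂μ = 1 / α) :
    ahat * (1 + α * ∫ y, lam y / ((ahat - 1) * lam y + ahat) ∂μ) < 1 := by
  have hD : ∀ᵐ y ∂μ, 1 < (ahat - 1) * lam y + ahat := by
    filter_upwards [hlow] with y hy
    nlinarith [mul_pos (sub_pos.2 ha) (neg_lt_iff_pos_add.1 hy)]
  have hlin : ahat * ∫ y, lam y / ((ahat - 1) * lam y + ahat) ∂μ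
      = -(ahat - 1) * ∫ y, (lam y) ^ 2 / ((ahat - 1) * lam y + ahat) ∂μ := by
    have key : ∫ y, ahat * (lam y / ((ahat - 1) * lam y + ahat)) ∂μ
        = ∫ y, (lam y - (ahat - 1) * ((lam y) ^ 2 / ((ahat - 1) * lam y + ahat))) ∂μ := by
      apply integral_congr_ae
      filter_upwards [hD] with y hy
      have hne : (ahat - 1) * lam y + ahat ≠ 0 := by linarith
      rw [← mul_div_assoc, ← mul_div_assoc, eq_sub_iff_add_eq, ← add_div, div_eq_iff hne]
      ring
    rw [integral_const_mul, integral_sub h1 (h3.const_mul _), integral_const_mul, hmean] at key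
    linarith
  have hgap : ∀ᵐ y ∂μ, (lam y / ((ahat - 1) * lam y + ahat)) ^ 2
      ≤ (lam y) ^ 2 / ((ahat - 1) * lam y + ahat) ∧ (lam y ≠ 0 →
      (lam y / ((ahat - 1) * lam y + ahat)) ^ 2
        < (lam y) ^ 2 / ((ahat - 1) * lam y + ahat)) := by
    filter_upwards [hD] with y hy
    have hD0 : 0 < (ahat - 1) * lam y + ahat := by linarith
    have hsq : (ahat - 1) * lam y + ahat < ((ahat - 1) * lam y + ahat) ^ 2 := by nlinarith
    rw [div_pow]
    exact ⟨div_le_div_of_nonneg_left (sq_nonneg _) hD0 hsq.le,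
      fun h => div_lt_div_of_pos_left (by positivity) hD0 hsq⟩
  have hpos : 0 < ∫ y, ((lam y) ^ 2 / ((ahat - 1) * lam y + ahat)
      - (lam y / ((ahat - 1) * lam y + ahat)) ^ 2) ∂μ := by
    rw [integral_pos_iff_support_of_nonneg_ae
      (hgap.mono fun y hy => sub_nonneg.2 hy.1) (h3.sub h4)]
    exact hne.trans_le (measure_mono_ae (hgap.mono fun y hy h => (sub_pos.2 (hy.2 h)).ne'))
  rw [integral_sub h3 h4, hfix] at hpos
  have hmul : 1 < α * ∫ y, (lam y) ^ 2 / ((ahat - 1) * lam y + ahat) ∂μ := by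
    rw [← div_lt_iff₀' hα]
    linarith
  calc ahat * (1 + α * ∫ y, lam y / ((ahat - 1) * lam y + ahat) ∂μ)
      = ahat - (ahat - 1) * (α * ∫ y, (lam y) ^ 2 / ((ahat - 1) * lam y + ahat) ∂μ) := by
        linear_combination α * hlin
    _ < 1 := by nlinarith [mul_lt_mul_of_pos_left hmul (sub_pos.2 ha)]
end

section
/- Let γ denote the standard Gaussian probability measure N(0,1) on ℝ. For every bounded measurable function f : ℝ → ℝ, ∫_{ℝ²} z₁·f(z₁/z₂) d(γ⊗γ)(z₁,z₂) = 0 and ∫_{ℝ²} z₂·f(z₁/z₂) d(γ⊗γ)(z₁,z₂) = 0. -/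
open MeasureTheory ProbabilityTheory

/-!
The standard Gaussian on ℝ² is invariant under `z ↦ -z`, the ratio `z₁ / z₂` is even under this
reflection (also where `z₂ = 0`, both sides being `0` there), and each coordinate is odd. Hence both
integrands are odd, and the integral of an odd function against a symmetric measure vanishes.
-/

/-- Integrability is not needed: a change of variables along the measurable equivalence `z ↦ -z`
holds for every integrand. -/
lemma integral_gaussian_prod_eq_zero_of_odd (h : ℝ × ℝ → ℝ) (hodd : ∀ z, h (-z) = -h z) :
    ∫ z, h z ∂((gaussianReal 0 1).prod (gaussianReal 0 1)) = 0 := by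
  have hneg : MeasurePreserving (fun x : ℝ => -x) (gaussianReal 0 1) (gaussianReal 0 1) :=
    ⟨measurable_neg, by simpa using gaussianReal_map_neg (μ := 0) (v := 1)⟩
  have hsymm : MeasurePreserving (MeasurableEquiv.neg (ℝ × ℝ))
      ((gaussianReal 0 1).prod (gaussianReal 0 1))
      ((gaussianReal 0 1).prod (gaussianReal 0 1)) := hneg.prod hneg
  have key := hsymm.integral_comp' h
  simp only [MeasurableEquiv.neg_apply, hodd, integral_neg] at key
  linarith

/-- For `z = (z₁, z₂)` standard Gaussian on ℝ² and any bounded measurable `f`,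
`E[z₁ f(z₁/z₂)] = 0` and `E[z₂ f(z₁/z₂)] = 0`, i.e. `E[z | y] = 0` for `y = z₁/z₂`. -/
theorem stmt13 (f : ℝ → ℝ) (hf : Measurable f) (C : ℝ) (hC : ∀ x, |f x| ≤ C) :
    (∫ z : ℝ × ℝ, z.1 * f (z.1 / z.2)
        ∂((gaussianReal 0 1).prod (gaussianReal 0 1))) = 0 ∧
    (∫ z : ℝ × ℝ, z.2 * f (z.1 / z.2)
        ∂((gaussianReal 0 1).prod (gaussianReal 0 1))) = 0 := by
  constructor <;> exact integral_gaussian_prod_eq_zero_of_odd _ fun z => by simp [neg_div_neg_eq]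
end

section
/- Let γ denote the standard Gaussian probability measure N(0,1) on ℝ. For every bounded measurable function f : ℝ → ℝ: (i) ∫_{ℝ²} z₁²·f(z₁/z₂) d(γ⊗γ) = ∫_ℝ f(y)·(2y²/(π(1+y²)²)) dy; (ii) ∫_{ℝ²} z₁z₂·f(z₁/z₂) d(γ⊗γ) = ∫_ℝ f(y)·(2y/(π(1+y²)²)) dy; (iii) ∫_{ℝ²} z₂²·f(z₁/z₂) d(γ⊗γ) = ∫_ℝ f(y)·(2/(π(1+y²)²)) dy. -/
/-!
Away from the null set `z₂ = 0`, the ratio `y = z₁ / z₂` satisfies `z₁² = z₂² y²` and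
`z₁ z₂ = z₂² y`, so all three identities are instances of
`E[z₂² g(z₁/z₂)] = ∫ g(y) · 2 / (π (1 + y²)²) dy`, for measurable `g` of at most quadratic growth
(`integral_snd_sq_mul_comp_div`). This one follows from the substitution `z₁ = t y` at fixed
`z₂ = t`, which turns the left side into
`∫ₜ ∫_y g(y) |t|³ exp (-(1 + y²) t² / 2) / (2π)`, then Fubini, then the Gamma integral
`∫ |t|³ exp (-b t²) dt = 1 / b²` at `b = (1 + y²) / 2`.
-/

open MeasureTheory ProbabilityTheory

lemma integrable_abs_cube_mul_exp {b : ℝ} (hb : 0 < b) :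
    Integrable fun t : ℝ => |t| ^ 3 * Real.exp (-b * t ^ 2) := by
  have h := (integrable_rpow_mul_exp_neg_mul_sq hb (s := 3) (by norm_num)).norm
  refine h.congr (Filter.Eventually.of_forall fun t => ?_)
  have h3 : t ^ (3 : ℝ) = t ^ 3 := by exact_mod_cast Real.rpow_natCast t 3
  simp [h3]

lemma integral_abs_cube_mul_exp {b : ℝ} (hb : 0 < b) :
    ∫ t : ℝ, |t| ^ 3 * Real.exp (-b * t ^ 2) = 1 / b ^ 2 := by
  have h1 := integral_comp_abs (f := fun t : ℝ => t ^ 3 * Real.exp (-b * t ^ 2))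
  simp only [sq_abs] at h1
  have h2 := integral_rpow_mul_exp_neg_mul_rpow (p := 2) (q := 3) (b := b)
    (by norm_num) (by norm_num) hb
  have hpow3 : ∀ t : ℝ, t ^ (3 : ℝ) = t ^ 3 := fun t => by exact_mod_cast Real.rpow_natCast t 3
  have hpow2 : ∀ t : ℝ, t ^ (2 : ℝ) = t ^ 2 := fun t => by exact_mod_cast Real.rpow_natCast t 2
  simp only [hpow3, hpow2] at h2
  have e1 : (-((3 : ℝ) + 1) / 2) = -2 := by norm_num
  have e2 : (((3 : ℝ) + 1) / 2) = 2 := by norm_num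
  rw [h1, h2, e1, e2, Real.Gamma_two, Real.rpow_neg hb.le, hpow2]
  ring

lemma gaussianPDFReal_mul_gaussianPDFReal (t y : ℝ) :
    gaussianPDFReal 0 1 t * gaussianPDFReal 0 1 (t * y) =
      1 / (2 * Real.pi) * Real.exp (-((1 + y ^ 2) / 2) * t ^ 2) := by
  have hs : (√(2 * Real.pi))⁻¹ * (√(2 * Real.pi))⁻¹ = 1 / (2 * Real.pi) := by
    rw [← mul_inv, Real.mul_self_sqrt (by positivity), one_div]
  have he : Real.exp (-((1 + y ^ 2) / 2) * t ^ 2) =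
      Real.exp (-t ^ 2 / 2) * Real.exp (-(t * y) ^ 2 / 2) := by
    rw [← Real.exp_add]; congr 1; ring
  simp only [gaussianPDFReal, NNReal.coe_one, mul_one, sub_zero]
  rw [he, ← hs]; ring

lemma abs_mul_gaussian_kernel (t y : ℝ) :
    t ^ 2 * |t| * (gaussianPDFReal 0 1 t * gaussianPDFReal 0 1 (t * y)) =
      1 / (2 * Real.pi) * (|t| ^ 3 * Real.exp (-((1 + y ^ 2) / 2) * t ^ 2)) := by
  have h : |t| ^ 3 = t ^ 2 * |t| := by rw [← sq_abs]; ring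
  rw [gaussianPDFReal_mul_gaussianPDFReal, h]; ring

lemma integral_gaussian_kernel (y : ℝ) :
    ∫ t : ℝ, 1 / (2 * Real.pi) * (|t| ^ 3 * Real.exp (-((1 + y ^ 2) / 2) * t ^ 2)) =
      2 / (Real.pi * (1 + y ^ 2) ^ 2) := by
  have : 0 < 1 + y ^ 2 := by positivity
  rw [integral_const_mul, integral_abs_cube_mul_exp (by positivity)]
  field_simp

/-- The integrand obtained from the substitution `z₁ = t y` is absolutely integrable: its
`t`-marginal is `|g y| · 2 / (π (1 + y²)²) ≤ 2C / (π (1 + y²))`. -/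
lemma integrable_kernel {g : ℝ → ℝ} (hg : Measurable g) {C : ℝ}
    (hC : ∀ y, |g y| ≤ C * (1 + y ^ 2)) :
    Integrable (Function.uncurry fun t y : ℝ =>
      g y * (1 / (2 * Real.pi) * (|t| ^ 3 * Real.exp (-((1 + y ^ 2) / 2) * t ^ 2))))
      (volume.prod volume) := by
  have hm : Measurable (Function.uncurry fun t y : ℝ =>
      g y * (1 / (2 * Real.pi) * (|t| ^ 3 * Real.exp (-((1 + y ^ 2) / 2) * t ^ 2)))) := by
    unfold Function.uncurry
    refine (hg.comp measurable_snd).mul (Measurable.const_mul ?_ _)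
    refine Continuous.measurable ?_
    fun_prop
  rw [integrable_prod_iff' hm.aestronglyMeasurable]
  constructor
  · refine Filter.Eventually.of_forall fun y => ?_
    have hy : 0 < (1 + y ^ 2) / 2 := by positivity
    exact ((integrable_abs_cube_mul_exp hy).const_mul (1 / (2 * Real.pi))).const_mul (g y)
  · have hnorm : (fun y : ℝ => ∫ t : ℝ, ‖Function.uncurry (fun t y : ℝ =>
        g y * (1 / (2 * Real.pi) * (|t| ^ 3 * Real.exp (-((1 + y ^ 2) / 2) * t ^ 2)))) (t, y)‖)
        = fun y => |g y| * (2 / (Real.pi * (1 + y ^ 2) ^ 2)) := by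
      funext y
      rw [← integral_gaussian_kernel y, ← integral_const_mul]
      refine integral_congr_ae (Filter.Eventually.of_forall fun t => ?_)
      simp only [Function.uncurry_apply_pair, Real.norm_eq_abs]
      rw [abs_mul, abs_of_nonneg (a := 1 / (2 * Real.pi) * _) (by positivity)]
    rw [hnorm]
    refine (integrable_inv_one_add_sq.const_mul (2 * C / Real.pi)).mono'
      (Measurable.aestronglyMeasurable (by fun_prop)) (Filter.Eventually.of_forall fun y => ?_)
    have hy : 0 < 1 + y ^ 2 := by positivity
    rw [Real.norm_of_nonneg (by positivity)]
    calc |g y| * (2 / (Real.pi * (1 + y ^ 2) ^ 2))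
        ≤ C * (1 + y ^ 2) * (2 / (Real.pi * (1 + y ^ 2) ^ 2)) := by
          gcongr
          exact hC y
      _ = 2 * C / Real.pi * (1 + y ^ 2)⁻¹ := by field_simp

lemma integrable_snd_sq_mul_comp_div {g : ℝ → ℝ} (hg : Measurable g) {C : ℝ}
    (hC : ∀ y, |g y| ≤ C * (1 + y ^ 2)) :
    Integrable (fun z : ℝ × ℝ => z.2 ^ 2 * g (z.1 / z.2))
      ((gaussianReal 0 1).prod (gaussianReal 0 1)) := by
  have hsq : Integrable (fun x : ℝ => x ^ 2) (gaussianReal 0 1) :=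
    (memLp_id_gaussianReal 2).integrable_sq
  refine (((hsq.comp_fst (gaussianReal 0 1)).add
    (hsq.comp_snd (gaussianReal 0 1))).const_mul C).mono'
    (Measurable.aestronglyMeasurable (by fun_prop)) (Filter.Eventually.of_forall fun z => ?_)
  have hC0 : 0 ≤ C := by simpa using (abs_nonneg _).trans (hC 0)
  rw [Real.norm_eq_abs, abs_mul, abs_of_nonneg (sq_nonneg z.2)]
  simp only [Pi.add_apply]
  -- At `z.2 = 0` the quotient is the junk value `0`, but the factor `z.2 ^ 2` vanishes.
  by_cases hz : z.2 = 0
  · rw [hz]; simp; positivity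
  · calc z.2 ^ 2 * |g (z.1 / z.2)| ≤ z.2 ^ 2 * (C * (1 + (z.1 / z.2) ^ 2)) := by
          gcongr
          exact hC _
      _ = C * (z.1 ^ 2 + z.2 ^ 2) := by field_simp; ring

/-- The common form of the three moment identities. -/
lemma integral_snd_sq_mul_comp_div {g : ℝ → ℝ} (hg : Measurable g) {C : ℝ}
    (hC : ∀ y, |g y| ≤ C * (1 + y ^ 2)) :
    ∫ z : ℝ × ℝ, z.2 ^ 2 * g (z.1 / z.2) ∂((gaussianReal 0 1).prod (gaussianReal 0 1)) =
      ∫ y : ℝ, g y * (2 / (Real.pi * (1 + y ^ 2) ^ 2)) := by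
  rw [integral_prod_symm _ (integrable_snd_sq_mul_comp_div hg hC)]
  simp only [integral_gaussianReal_eq_integral_smul one_ne_zero, smul_eq_mul]
  have hinner : ∀ t : ℝ, gaussianPDFReal 0 1 t *
      ∫ x : ℝ, gaussianPDFReal 0 1 x * (t ^ 2 * g (x / t)) =
      ∫ y : ℝ, g y * (1 / (2 * Real.pi) *
        (|t| ^ 3 * Real.exp (-((1 + y ^ 2) / 2) * t ^ 2))) := by
    intro t
    -- The substitution fails at `t = 0`, where both sides vanish.
    by_cases ht : t = 0
    · simp [ht]
    have hsub := Measure.integral_comp_div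
      (fun y : ℝ => gaussianPDFReal 0 1 (t * y) * (t ^ 2 * g y)) t
    simp only [mul_div_cancel₀ _ ht, smul_eq_mul] at hsub
    rw [hsub, ← mul_assoc, ← integral_const_mul]
    refine integral_congr_ae (Filter.Eventually.of_forall fun y => ?_)
    simp only []
    rw [← abs_mul_gaussian_kernel]
    ring
  simp only [hinner]
  rw [integral_integral_swap (integrable_kernel hg hC)]
  refine integral_congr_ae (Filter.Eventually.of_forall fun y => ?_)
  simp only []
  rw [integral_const_mul, integral_gaussian_kernel]



/-- Conditional second moments for `y = z₁/z₂` with `(z₁, z₂)` standard Gaussian on ℝ²: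
for any bounded measurable `f`,
`E[z₁² f(y)] = ∫ f(y)·2y²/(π(1+y²)²) dy`, `E[z₁z₂ f(y)] = ∫ f(y)·2y/(π(1+y²)²) dy`,
`E[z₂² f(y)] = ∫ f(y)·2/(π(1+y²)²) dy`. -/
theorem stmt14 (f : ℝ → ℝ) (hf : Measurable f) (C : ℝ) (hC : ∀ x, |f x| ≤ C) :
    (∫ z : ℝ × ℝ, z.1 ^ 2 * f (z.1 / z.2)
        ∂((gaussianReal 0 1).prod (gaussianReal 0 1))) =
      ∫ y : ℝ, f y * (2 * y ^ 2 / (Real.pi * (1 + y ^ 2) ^ 2)) ∧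
    (∫ z : ℝ × ℝ, z.1 * z.2 * f (z.1 / z.2)
        ∂((gaussianReal 0 1).prod (gaussianReal 0 1))) =
      ∫ y : ℝ, f y * (2 * y / (Real.pi * (1 + y ^ 2) ^ 2)) ∧
    (∫ z : ℝ × ℝ, z.2 ^ 2 * f (z.1 / z.2)
        ∂((gaussianReal 0 1).prod (gaussianReal 0 1))) =
      ∫ y : ℝ, f y * (2 / (Real.pi * (1 + y ^ 2) ^ 2)) := by
  have hC0 : 0 ≤ C := (abs_nonneg _).trans (hC 0)
  have hne : ∀ᵐ z : ℝ × ℝ ∂((gaussianReal 0 1).prod (gaussianReal 0 1)), z.2 ≠ 0 := by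
    have := nullSingletonClass_gaussianReal (μ := 0) (v := 1) one_ne_zero
    exact Measure.quasiMeasurePreserving_snd.ae
      (compl_mem_ae_iff.2 (measure_singleton (μ := gaussianReal 0 1) (0 : ℝ)))
  refine ⟨?_, ?_, ?_⟩
  · have h := integral_snd_sq_mul_comp_div (g := fun y => y ^ 2 * f y) (by fun_prop) (C := C)
      fun y => by
        rw [abs_mul, abs_of_nonneg (sq_nonneg y)]
        nlinarith [hC y, sq_nonneg y]
    convert! h using 1
    · refine integral_congr_ae (hne.mono fun z hz => ?_)
      simp only []
      field_simp
    · congr 1; funext y; ring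
  · have h := integral_snd_sq_mul_comp_div (g := fun y => y * f y) (by fun_prop) (C := C)
      fun y => by
        have hy : |y| ≤ 1 + y ^ 2 := by nlinarith [sq_abs y, sq_nonneg (|y| - 1), abs_nonneg y]
        rw [abs_mul, mul_comm C]
        exact mul_le_mul hy (hC y) (abs_nonneg _) (by positivity)
    convert! h using 1
    · refine integral_congr_ae (hne.mono fun z hz => ?_)
      simp only []
      field_simp
    · congr 1; funext y; ring
  · exact integral_snd_sq_mul_comp_div hf (C := C) fun y => by nlinarith [hC y, sq_nonneg y]
end
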